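/- Let M = (X, I) be a matroid and let k be an integer with 1 ≤ k < rk(M). Then I(k)² ≥ (1 + 1/k)·(1 + 1/(p(k−1) − 1))·I(k−1)·I(k+1), where p(k−1) is the (k−1)-continuation number of M (note that p(k−1) ≥ 2 automatically holds since k < rk(M)). -/

import Mathlib

open scoped Classical BigOperators

noncomputable section

variable {X : Type*} [Fintype X] [DecidableEq X]

/-- The number of independent sets of size `k` of the set system `Indep`. -/
def numIndep (Indep : Finset X → Prop) (k : ℕ) : ℕ :=
  (Finset.univ.filter (fun S : Finset X => Indep S ∧ S.card = k)).card

/-- The rank of a matroid: the maximal size of an independent set. -/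
def matroidRk (Indep : Finset X → Prop) : ℕ :=
  Finset.univ.sup (fun S : Finset X => if Indep S then S.card else 0)

/-- The set of continuations of an independent set `S`. -/
def mCont (Indep : Finset X → Prop) (S : Finset X) : Finset X :=
  Finset.univ.filter (fun x => x ∉ S ∧ Indep (insert x S))

/-- The parallel class of `x ∈ Cnt(S)`:  the set of continuations `y` with `y ∼_S x`,
i.e. `y = x` or `S ∪ {x,y}` is not independent. -/
def mParClass (Indep : Finset X → Prop) (S : Finset X) (x : X) : Finset X :=
  (mCont Indep S).filter (fun y => y = x ∨ ¬ Indep (insert y (insert x S)))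

/-- The set `Par(S)` of parallel classes of `S`. -/
def mParClasses (Indep : Finset X → Prop) (S : Finset X) : Finset (Finset X) :=
  (mCont Indep S).image (mParClass Indep S)

/-- The `k`-continuation number `p(k)`: the maximal number of parallel classes of an
independent set of size `k`. -/
def contNum (Indep : Finset X → Prop) (k : ℕ) : ℕ :=
  (Finset.univ.filter (fun S : Finset X => Indep S ∧ S.card = k)).sup
    (fun S => (mParClasses Indep S).card)

/-! Homogenize the generating polynomial of the independent sets to degree `k + 1` by an extra
variable `w`, with weights depending on a parameter `c`. For `c = p / (p - 1)`, `p = p(k - 1)`, its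
derivatives of order `k - 1` are quadratic forms with at most one positive eigenvalue: for the
derivative along an independent set this is Cauchy–Schwarz over its parallel classes.

Having at most one positive eigenvalue passes from the Hessians of all derivatives `∂_x Q` to the
Hessian of `Q`, where `Q` is a derivative of the polynomial in a positive direction `t`. Indeed, the
reverse Cauchy–Schwarz inequality for these Hessians yields a Bochner-type bound which, compared
with the Dirichlet energy of the Hessian of `Q`, shows that eigenvectors with positive (normalized)
eigenvalue have zero energy. Since `w` is joined to every other vertex of the graph of nonzero
entries, such vectors are proportional to `t`.

Finally, differentiate `k - 1` times in the direction of the sum of the ground elements, and apply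
the reverse Cauchy–Schwarz inequality to this direction and `w`. -/

open scoped Matrix

section Hyperbolic

variable {V : Type*} [Fintype V]

/-- A real matrix is hyperbolic if its quadratic form is nonpositive on some hyperplane; a symmetric
matrix is hyperbolic if and only if it has at most one positive eigenvalue. The normal vector `h`
may be zero, in which case the form is nonpositive everywhere. -/
def IsHyperbolicForm (Q : Matrix V V ℝ) : Prop :=
  ∃ h : V → ℝ, ∀ v : V → ℝ, h ⬝ᵥ v = 0 → v ⬝ᵥ Q *ᵥ v ≤ 0

theorem dotProduct_mulVec_comm_of_isSymm {Q : Matrix V V ℝ} (hQ : Q.IsSymm) (u v : V → ℝ) :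
    u ⬝ᵥ Q *ᵥ v = v ⬝ᵥ Q *ᵥ u := by
  rw [Matrix.dotProduct_mulVec, ← Matrix.mulVec_transpose, hQ.eq, dotProduct_comm]

theorem IsHyperbolicForm.mul_le_sq {Q : Matrix V V ℝ} (hyp : IsHyperbolicForm Q) (hQ : Q.IsSymm)
    {u : V → ℝ} (hu : 0 < u ⬝ᵥ Q *ᵥ u) (v : V → ℝ) :
    (u ⬝ᵥ Q *ᵥ u) * (v ⬝ᵥ Q *ᵥ v) ≤ (u ⬝ᵥ Q *ᵥ v) ^ 2 := by
  obtain ⟨h, hneg⟩ := hyp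
  have hhu : h ⬝ᵥ u ≠ 0 := fun h0 => (hneg u h0).not_gt hu
  set s := (h ⬝ᵥ v) / (h ⬝ᵥ u) with hs
  have hperp : h ⬝ᵥ (v - s • u) = 0 := by
    rw [dotProduct_sub, dotProduct_smul, smul_eq_mul, hs, div_mul_cancel₀ _ hhu, sub_self]
  have hexpand : (v - s • u) ⬝ᵥ Q *ᵥ (v - s • u)
      = v ⬝ᵥ Q *ᵥ v - 2 * s * (u ⬝ᵥ Q *ᵥ v) + s ^ 2 * (u ⬝ᵥ Q *ᵥ u) := by
    simp only [Matrix.mulVec_sub, Matrix.mulVec_smul, sub_dotProduct, dotProduct_sub,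
      smul_dotProduct, dotProduct_smul, smul_eq_mul, dotProduct_mulVec_comm_of_isSymm hQ v u]
    ring
  have hle := hneg _ hperp
  rw [hexpand] at hle
  nlinarith [sq_nonneg (u ⬝ᵥ Q *ᵥ v - s * (u ⬝ᵥ Q *ᵥ u))]

theorem dotProduct_mulVec_nonpos_of_eigenvectors {B : Matrix V V ℝ} (hB : B.IsSymm) {u : V → ℝ}
    (h : ∀ (l : ℝ) (w : V → ℝ), 0 < l → B *ᵥ w = l • w → w ⬝ᵥ u = 0) : u ⬝ᵥ B *ᵥ u ≤ 0 := by
  have hH : B.IsHermitian := by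
    rw [Matrix.IsHermitian, Matrix.conjTranspose_eq_transpose_of_trivial, hB.eq]
  have hparseval := hH.eigenvectorBasis.sum_inner_mul_inner (WithLp.toLp 2 u)
    (WithLp.toLp 2 (B *ᵥ u))
  simp only [EuclideanSpace.inner_eq_star_dotProduct, star_trivial] at hparseval
  rw [dotProduct_comm, ← hparseval]
  refine Finset.sum_nonpos fun i _ => ?_
  set w : V → ℝ := (hH.eigenvectorBasis i).ofLp
  have heig : B *ᵥ w = hH.eigenvalues i • w := hH.mulVec_eigenvectorBasis i
  rw [dotProduct_comm (B *ᵥ u), dotProduct_mulVec_comm_of_isSymm hB, heig, dotProduct_smul,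
    smul_eq_mul, dotProduct_comm u w]
  rcases le_or_gt (hH.eigenvalues i) 0 with hl | hl
  · nlinarith [mul_self_nonneg (w ⬝ᵥ u)]
  · simp [h _ w hl heig]

theorem dotProduct_mulVec_nonpos_of_weighted_eigenvectors {Q : Matrix V V ℝ} (hQ : Q.IsSymm)
    {d : V → ℝ} (hd : ∀ x, 0 ≤ d x) (hdQ : ∀ x, d x = 0 → ∀ y, Q x y = 0) {u : V → ℝ}
    (h : ∀ (l : ℝ) (w : V → ℝ), 0 < l → Q *ᵥ w = l • (d * w) → w ⬝ᵥ (d * u) = 0) :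
    u ⬝ᵥ Q *ᵥ u ≤ 0 := by
  set s : V → ℝ := fun x => √(d x)
  have hss : s * s = d := funext fun x => Real.mul_self_sqrt (hd x)
  have hsQ : ∀ x, s x = 0 → ∀ y, Q x y = 0 := fun x hx => hdQ x (by simp [← hss, hx])
  let B : Matrix V V ℝ := Matrix.of fun x y => (s x)⁻¹ * Q x y * (s y)⁻¹
  have hB : B.IsSymm := Matrix.IsSymm.ext fun x y => by
    simp only [B, Matrix.of_apply, hQ.apply]
    ring
  have hQB : ∀ v, Q *ᵥ v = s * (B *ᵥ (s * v)) := by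
    intro v
    ext x
    simp only [Matrix.mulVec, dotProduct, Pi.mul_apply, Finset.mul_sum]
    refine Finset.sum_congr rfl fun y _ => ?_
    by_cases hx : s x = 0
    · simp [hx, hsQ x hx]
    by_cases hy : s y = 0
    · simp [hy, ← hQ.apply x y, hsQ y hy]
    simp only [B, Matrix.of_apply]
    field_simp
  have hfactor : ∀ v w : V → ℝ, v ⬝ᵥ (s * w) = (s * v) ⬝ᵥ w := fun v w => by
    simp only [dotProduct, Pi.mul_apply]
    exact Finset.sum_congr rfl fun x _ => by ring
  rw [hQB, hfactor]
  refine dotProduct_mulVec_nonpos_of_eigenvectors hB fun l w hl hw => ?_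
  have hws : w = s * (s⁻¹ * w) := by
    ext x
    by_cases hx : s x = 0
    · have hBx : (B *ᵥ w) x = 0 := by simp [B, Matrix.mulVec, dotProduct, hx]
      simpa [hw, hl.ne', hx] using hBx
    · simp [hx]
  have heig : Q *ᵥ (s⁻¹ * w) = l • (d * (s⁻¹ * w)) := by
    rw [hQB, ← hws, hw, mul_smul_comm, ← hss, mul_assoc, ← hws]
  rw [hws, ← hfactor, ← mul_assoc, hss]
  exact h l _ hl heig

/-- The Dirichlet energy of `v` relative to `t` for the symmetric edge weights `Q x y * t x * t y`.
It vanishes only if `v / t` is constant along the edges. -/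
def dirichletEnergy (Q : Matrix V V ℝ) (t v : V → ℝ) : ℝ :=
  (∑ x, ∑ y, Q x y * (t x * t y) * (v x / t x - v y / t y) ^ 2) / 2

theorem dirichletEnergy_eq {Q : Matrix V V ℝ} (hQ : Q.IsSymm) {t : V → ℝ} (ht : ∀ x, t x ≠ 0)
    (v : V → ℝ) : dirichletEnergy Q t v = v ⬝ᵥ (Q *ᵥ t / t * v) - v ⬝ᵥ Q *ᵥ v := by
  have hrow : v ⬝ᵥ (Q *ᵥ t / t * v) = ∑ x, ∑ y, Q x y * t y * (v x ^ 2 / t x) := by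
    simp only [dotProduct, Matrix.mulVec, Pi.mul_apply, Pi.div_apply, ← Finset.sum_mul]
    exact Finset.sum_congr rfl fun x _ => by ring
  have hcol : v ⬝ᵥ (Q *ᵥ t / t * v) = ∑ x, ∑ y, Q x y * t x * (v y ^ 2 / t y) := by
    rw [hrow, Finset.sum_comm]
    simp only [hQ.apply]
  rw [dirichletEnergy, div_eq_iff two_ne_zero, sub_mul, mul_two (v ⬝ᵥ (Q *ᵥ t / t * v))]
  nth_rw 1 [hrow]
  rw [hcol]
  simp only [dotProduct, Matrix.mulVec, Finset.mul_sum, Finset.sum_mul, ← Finset.sum_sub_distrib,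
    ← Finset.sum_add_distrib]
  refine Finset.sum_congr rfl fun x _ => Finset.sum_congr rfl fun y _ => ?_
  have := ht x
  have := ht y
  field_simp
  ring

section Energy

variable {Q : Matrix V V ℝ} (hQ : ∀ x y, 0 ≤ Q x y) {t : V → ℝ} (ht : ∀ x, 0 < t x)
include hQ ht

theorem mulVec_apply_eq_zero_iff {x : V} : (Q *ᵥ t) x = 0 ↔ ∀ y, Q x y = 0 := by
  simp [Matrix.mulVec, dotProduct, Finset.sum_eq_zero_iff_of_nonneg
    fun y _ => mul_nonneg (hQ x y) (ht y).le, (ht _).ne']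

theorem mulVec_apply_nonneg (x : V) : 0 ≤ (Q *ᵥ t) x :=
  Finset.sum_nonneg fun y _ => mul_nonneg (hQ x y) (ht y).le

omit [Fintype V] in
theorem dirichletEnergy_term_nonneg (v : V → ℝ) (x y : V) :
    0 ≤ Q x y * (t x * t y) * (v x / t x - v y / t y) ^ 2 :=
  mul_nonneg (mul_nonneg (hQ x y) (mul_pos (ht x) (ht y)).le) (sq_nonneg _)

theorem dirichletEnergy_nonneg (v : V → ℝ) : 0 ≤ dirichletEnergy Q t v :=
  div_nonneg (Finset.sum_nonneg fun x _ => Finset.sum_nonneg fun y _ =>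
    dirichletEnergy_term_nonneg hQ ht v x y) zero_le_two

theorem div_eq_div_of_dirichletEnergy_eq_zero {v : V → ℝ} (hv : dirichletEnergy Q t v = 0) {x y : V}
    (hxy : 0 < Q x y) : v x / t x = v y / t y := by
  have hnonneg := dirichletEnergy_term_nonneg hQ ht v
  have hsum := (div_eq_zero_iff.1 hv).resolve_right two_ne_zero
  have hrow := (Fintype.sum_eq_zero_iff_of_nonneg fun x => Finset.sum_nonneg fun y _ =>
    hnonneg x y).1 hsum
  have hterm := congrFun ((Fintype.sum_eq_zero_iff_of_nonneg (hnonneg x)).1 (congrFun hrow x)) y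
  have hsq := (mul_eq_zero.1 hterm).resolve_left (mul_pos hxy (mul_pos (ht x) (ht y))).ne'
  exact sub_eq_zero.1 (pow_eq_zero_iff two_ne_zero |>.1 hsq)

/-- Unless the weighted norm of `w` vanishes, the Bochner bound forces `l ≤ l ^ 2` and the Dirichlet
identity forces `l ≤ 1`. -/
theorem dirichletEnergy_eq_zero_of_eigenvector (hsymm : Q.IsSymm) {l : ℝ} (hl : 0 < l) {w : V → ℝ}
    (hw : Q *ᵥ w = l • (Q *ᵥ t / t * w))
    (hbochner : w ⬝ᵥ Q *ᵥ w ≤ ∑ x, t x * (Q *ᵥ w) x ^ 2 / (Q *ᵥ t) x) :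
    dirichletEnergy Q t w = 0 := by
  set N := w ⬝ᵥ (Q *ᵥ t / t * w) with hN
  have hQw : w ⬝ᵥ Q *ᵥ w = l * N := by rw [hw, dotProduct_smul, smul_eq_mul]
  have hN0 : 0 ≤ N := Finset.sum_nonneg fun x _ => by
    have := div_nonneg (mulVec_apply_nonneg hQ ht x) (ht x).le
    simp only [Pi.mul_apply, Pi.div_apply]
    nlinarith [mul_nonneg this (mul_self_nonneg (w x))]
  have hsum : ∑ x, t x * (Q *ᵥ w) x ^ 2 / (Q *ᵥ t) x = l ^ 2 * N := by
    rw [hN, dotProduct, Finset.mul_sum]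
    refine Finset.sum_congr rfl fun x _ => ?_
    rw [hw]
    have := (ht x).ne'
    by_cases hx : (Q *ᵥ t) x = 0
    · simp [hx]
    · simp only [Pi.smul_apply, Pi.mul_apply, Pi.div_apply, smul_eq_mul]
      field_simp
  have henergy : dirichletEnergy Q t w = N - l * N := by
    rw [dirichletEnergy_eq hsymm fun x => (ht x).ne', hQw]
  rw [hQw, hsum] at hbochner
  have hE := dirichletEnergy_nonneg hQ ht w
  rw [henergy] at hE ⊢
  nlinarith

theorem isHyperbolicForm_of_bochner (hsymm : Q.IsSymm) {o : V}
    (ho : ∀ x, (Q *ᵥ t) x ≠ 0 → 0 < Q o x)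
    (hbochner : ∀ v, v ⬝ᵥ Q *ᵥ v ≤ ∑ x, t x * (Q *ᵥ v) x ^ 2 / (Q *ᵥ t) x) :
    IsHyperbolicForm Q := by
  refine ⟨Q *ᵥ t, fun v hv => dotProduct_mulVec_nonpos_of_weighted_eigenvectors hsymm
    (d := Q *ᵥ t / t) (fun x => div_nonneg (mulVec_apply_nonneg hQ ht x) (ht x).le)
    (fun x hx => (mulVec_apply_eq_zero_iff hQ ht).1
      ((div_eq_zero_iff.1 hx).resolve_right (ht x).ne')) fun l w hl hw => ?_⟩
  have henergy := dirichletEnergy_eq_zero_of_eigenvector hQ ht hsymm hl hw (hbochner w)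
  have hprop : w * (Q *ᵥ t / t * v) = (w o / t o) • (Q *ᵥ t * v) := by
    ext x
    by_cases hx : (Q *ᵥ t) x = 0
    · simp [hx]
    · rw [div_eq_div_of_dirichletEnergy_eq_zero hQ ht henergy (ho x hx)]
      simp only [Pi.mul_apply, Pi.div_apply, Pi.smul_apply, smul_eq_mul]
      ring
  calc w ⬝ᵥ (Q *ᵥ t / t * v) = ∑ x, ((w o / t o) • (Q *ᵥ t * v)) x :=
        Finset.sum_congr rfl fun x _ => congrFun hprop x
    _ = (w o / t o) * (Q *ᵥ t ⬝ᵥ v) := by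
        simp only [Pi.smul_apply, Pi.mul_apply, smul_eq_mul, dotProduct, Finset.mul_sum]
    _ = 0 := by rw [hv, mul_zero]

end Energy

end Hyperbolic

section DirectionalDerivative

variable {V : Type*}

/-- The matrix `(x, y) ↦ f (L + {x, y})`. When `f M` stands for the mixed partial derivative `∂^M P`
of a polynomial `P` in variables indexed by `V`, this is the Hessian of `∂^L P`. -/
def multisetHessian (f : Multiset V → ℝ) (L : Multiset V) : Matrix V V ℝ :=
  Matrix.of fun x y => f (x ::ₘ y ::ₘ L)

/-- A positive value `f M` stays positive when one of the elements of `M` is replaced by `o`. This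
makes `o` a neighbour of every other non-isolated vertex in the graph of positive entries of each
Hessian of a derivative of `f`. -/
def IsApex (o : V) (f : Multiset V → ℝ) : Prop :=
  ∀ ⦃x M⦄, 0 < f (x ::ₘ M) → 0 < f (o ::ₘ M)

theorem isSymm_multisetHessian (f : Multiset V → ℝ) (L : Multiset V) :
    (multisetHessian f L).IsSymm :=
  Matrix.IsSymm.ext fun x y => congrArg f (Multiset.cons_swap y x L)

variable [Fintype V]

/-- The derivative in direction `t` of a family `f` indexed by multisets of variables: when `f M`
stands for the mixed partial derivative `∂^M P`, this is `∂^M (∂_t P)`. -/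
def dirDeriv (t : V → ℝ) (f : Multiset V → ℝ) : Multiset V → ℝ :=
  fun M => ∑ z, t z * f (z ::ₘ M)

theorem continuous_iterate_dirDeriv (f : Multiset V → ℝ) (m : ℕ) (M : Multiset V) :
    Continuous fun t => (dirDeriv t)^[m] f M := by
  induction m generalizing M with
  | zero => exact continuous_const
  | succ m ih =>
    simp only [Function.iterate_succ_apply']
    exact continuous_finsetSum _ fun z _ => (continuous_apply z).mul (ih _)

theorem multisetHessian_dirDeriv (t : V → ℝ) (f : Multiset V → ℝ) (L : Multiset V) :
    multisetHessian (dirDeriv t f) L = ∑ z, t z • multisetHessian f (z ::ₘ L) := by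
  ext x y
  simp only [multisetHessian, dirDeriv, Matrix.of_apply, Matrix.sum_apply, Matrix.smul_apply,
    smul_eq_mul]
  refine Finset.sum_congr rfl fun z _ => ?_
  rw [Multiset.cons_swap z x, Multiset.cons_swap z y]

theorem multisetHessian_dirDeriv_mulVec_apply (t : V → ℝ) (f : Multiset V → ℝ) (L : Multiset V)
    (v : V → ℝ) (x : V) :
    (multisetHessian (dirDeriv t f) L *ᵥ v) x = t ⬝ᵥ multisetHessian f (x ::ₘ L) *ᵥ v := by
  rw [dotProduct_mulVec_comm_of_isSymm (isSymm_multisetHessian f _)]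
  refine Finset.sum_congr rfl fun y _ => ?_
  simp only [multisetHessian, dirDeriv, Matrix.of_apply, Matrix.mulVec, dotProduct, mul_comm (v y)]
  congr 1
  refine Finset.sum_congr rfl fun z _ => ?_
  rw [mul_comm, Multiset.cons_swap x y, Multiset.cons_swap z y]

theorem dotProduct_multisetHessian_dirDeriv_mulVec (t : V → ℝ) (f : Multiset V → ℝ)
    (L : Multiset V) (v : V → ℝ) :
    v ⬝ᵥ multisetHessian (dirDeriv t f) L *ᵥ v
      = ∑ x, t x * (v ⬝ᵥ multisetHessian f (x ::ₘ L) *ᵥ v) := by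
  simp only [multisetHessian_dirDeriv, Matrix.sum_mulVec, Matrix.smul_mulVec, dotProduct_sum,
    dotProduct_smul, smul_eq_mul]

theorem dirDeriv_dirDeriv_apply (t : V → ℝ) (f : Multiset V → ℝ) (L : Multiset V) :
    dirDeriv t (dirDeriv t f) L = t ⬝ᵥ multisetHessian f L *ᵥ t := by
  simp only [dirDeriv, multisetHessian, Matrix.mulVec, dotProduct, Matrix.of_apply]
  refine Finset.sum_congr rfl fun x _ => congrArg _ (Finset.sum_congr rfl fun y _ => ?_)
  rw [mul_comm, Multiset.cons_swap]

theorem dirDeriv_nonneg {t : V → ℝ} (ht : ∀ x, 0 ≤ t x) {f : Multiset V → ℝ} (hf : ∀ M, 0 ≤ f M)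
    (M : Multiset V) : 0 ≤ dirDeriv t f M :=
  Finset.sum_nonneg fun z _ => mul_nonneg (ht z) (hf _)

theorem iterate_dirDeriv_nonneg {t : V → ℝ} (ht : ∀ x, 0 ≤ t x) {f : Multiset V → ℝ}
    (hf : ∀ M, 0 ≤ f M) (m : ℕ) : ∀ M, 0 ≤ (dirDeriv t)^[m] f M := by
  induction m with
  | zero => exact hf
  | succ m ih =>
    rw [Function.iterate_succ_apply']
    exact dirDeriv_nonneg ht ih

theorem dirDeriv_mul_le_sq_of_isHyperbolicForm {t : V → ℝ} (ht : ∀ x, 0 ≤ t x)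
    {f : Multiset V → ℝ} (hf : ∀ M, 0 ≤ f M) {L : Multiset V}
    (hyp : IsHyperbolicForm (multisetHessian f L)) (a : V) :
    dirDeriv t (dirDeriv t f) L * f (a ::ₘ a ::ₘ L) ≤ dirDeriv t f (a ::ₘ L) ^ 2 := by
  have hrow : dirDeriv t f (a ::ₘ L) = t ⬝ᵥ multisetHessian f L *ᵥ Pi.single a 1 := by
    simp [dirDeriv, multisetHessian, dotProduct]
  have hdiag : f (a ::ₘ a ::ₘ L) = Pi.single a 1 ⬝ᵥ multisetHessian f L *ᵥ Pi.single a 1 := by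
    simp [multisetHessian]
  rcases (dirDeriv_nonneg ht (dirDeriv_nonneg ht hf) L).eq_or_lt with hzero | hpos
  · simpa [← hzero] using sq_nonneg _
  · rw [dirDeriv_dirDeriv_apply] at hpos ⊢
    rw [hrow, hdiag]
    exact hyp.mul_le_sq (isSymm_multisetHessian f L) hpos _

section Positive

variable {f : Multiset V → ℝ} (hf : ∀ M, 0 ≤ f M) {t : V → ℝ} (ht : ∀ x, 0 < t x)
include hf ht

theorem dirDeriv_pos_iff {M : Multiset V} : 0 < dirDeriv t f M ↔ ∃ z, 0 < f (z ::ₘ M) := by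
  rw [dirDeriv, Finset.sum_pos_iff_of_nonneg fun z _ => mul_nonneg (ht z).le (hf _)]
  simp [ht]

theorem IsApex.dirDeriv {o : V} (ho : IsApex o f) : IsApex o (dirDeriv t f) := by
  intro x M hx
  obtain ⟨z, hz⟩ := (dirDeriv_pos_iff hf ht).1 hx
  rw [Multiset.cons_swap] at hz
  refine (dirDeriv_pos_iff hf ht).2 ⟨z, ?_⟩
  rw [Multiset.cons_swap]
  exact ho hz

theorem IsApex.iterate_dirDeriv {o : V} (ho : IsApex o f) (m : ℕ) :
    IsApex o ((_root_.dirDeriv t)^[m] f) := by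
  induction m with
  | zero => exact ho
  | succ m ih =>
    rw [Function.iterate_succ_apply']
    exact ih.dirDeriv (iterate_dirDeriv_nonneg (fun x => (ht x).le) hf m) ht

theorem multisetHessian_eq_zero_of_dirDeriv_dirDeriv_eq_zero {L : Multiset V}
    (hL : dirDeriv t (dirDeriv t f) L = 0) : multisetHessian f L = 0 := by
  ext x y
  by_contra hxy
  have hpos : 0 < f (x ::ₘ y ::ₘ L) := (hf _).lt_of_ne' hxy
  exact hL.not_gt <| (dirDeriv_pos_iff (dirDeriv_nonneg (fun x => (ht x).le) hf) ht).2
    ⟨y, (dirDeriv_pos_iff hf ht).2 ⟨x, hpos⟩⟩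

/-- Apply the reverse Cauchy–Schwarz inequality to `t` and `v` in each of the forms
`multisetHessian f (x ::ₘ L)`, of which the left-hand side is the sum with weights `t x`. -/
theorem dotProduct_multisetHessian_dirDeriv_mulVec_le {L : Multiset V}
    (hyp : ∀ x, IsHyperbolicForm (multisetHessian f (x ::ₘ L))) (v : V → ℝ) :
    v ⬝ᵥ multisetHessian (dirDeriv t f) L *ᵥ v
      ≤ ∑ x, t x * (multisetHessian (dirDeriv t f) L *ᵥ v) x ^ 2
        / (multisetHessian (dirDeriv t f) L *ᵥ t) x := by
  rw [dotProduct_multisetHessian_dirDeriv_mulVec]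
  refine Finset.sum_le_sum fun x _ => ?_
  simp only [multisetHessian_dirDeriv_mulVec_apply, ← dirDeriv_dirDeriv_apply t]
  rw [mul_div_assoc]
  refine mul_le_mul_of_nonneg_left ?_ (ht x).le
  have ht0 : ∀ x, 0 ≤ t x := fun x => (ht x).le
  rcases (dirDeriv_nonneg ht0 (dirDeriv_nonneg ht0 hf) (x ::ₘ L)).eq_or_lt with hzero | hpos
  · simp [multisetHessian_eq_zero_of_dirDeriv_dirDeriv_eq_zero hf ht hzero.symm]
  · rw [le_div_iff₀ hpos, mul_comm]
    rw [dirDeriv_dirDeriv_apply] at hpos ⊢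
    exact (hyp x).mul_le_sq (isSymm_multisetHessian f _) hpos v

theorem isHyperbolicForm_multisetHessian_dirDeriv {o : V} (ho : IsApex o f) {L : Multiset V}
    (hyp : ∀ x, IsHyperbolicForm (multisetHessian f (x ::ₘ L))) :
    IsHyperbolicForm (multisetHessian (dirDeriv t f) L) := by
  have hnonneg : ∀ M, 0 ≤ dirDeriv t f M := dirDeriv_nonneg (fun x => (ht x).le) hf
  refine isHyperbolicForm_of_bochner (fun x y => hnonneg _) ht (isSymm_multisetHessian _ L)
    (o := o) (fun x hx => ?_) (dotProduct_multisetHessian_dirDeriv_mulVec_le hf ht hyp)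
  obtain ⟨y, hy⟩ : ∃ y, dirDeriv t f (x ::ₘ y ::ₘ L) ≠ 0 := by
    by_contra! hrow
    exact hx ((mulVec_apply_eq_zero_iff (fun x y => hnonneg _) ht).2 hrow)
  rw [Multiset.cons_swap] at hy
  exact ho.dirDeriv hf ht ((hnonneg _).lt_of_ne' hy)

theorem isHyperbolicForm_multisetHessian_iterate_dirDeriv {o : V} (ho : IsApex o f) {n : ℕ}
    (hyp : ∀ L, L.card = n → IsHyperbolicForm (multisetHessian f L)) (m : ℕ) {L : Multiset V}
    (hL : L.card + m = n) : IsHyperbolicForm (multisetHessian ((dirDeriv t)^[m] f) L) := by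
  induction m generalizing L with
  | zero => exact hyp L hL
  | succ m ih =>
    rw [Function.iterate_succ_apply']
    exact isHyperbolicForm_multisetHessian_dirDeriv
      (iterate_dirDeriv_nonneg (fun x => (ht x).le) hf m) ht (ho.iterate_dirDeriv hf ht m)
      fun x => ih (by rw [Multiset.card_cons]; omega)

end Positive

theorem iterate_dirDeriv_mul_le_sq {f : Multiset V → ℝ} (hf : ∀ M, 0 ≤ f M) {o : V}
    (ho : IsApex o f) {n : ℕ} (hyp : ∀ L, L.card = n → IsHyperbolicForm (multisetHessian f L))
    {t : V → ℝ} (ht : ∀ x, 0 ≤ t x) (a : V) :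
    (dirDeriv t)^[n + 2] f 0 * (dirDeriv t)^[n] f {a, a} ≤ ((dirDeriv t)^[n + 1] f {a}) ^ 2 := by
  let good : Set (V → ℝ) :=
    {t | (dirDeriv t)^[n + 2] f 0 * (dirDeriv t)^[n] f {a, a} ≤ ((dirDeriv t)^[n + 1] f {a}) ^ 2}
  have hclosed : IsClosed good := isClosed_le
    ((continuous_iterate_dirDeriv f _ _).mul (continuous_iterate_dirDeriv f _ _))
    ((continuous_iterate_dirDeriv f _ _).pow 2)
  have hpos : Set.univ.pi (fun _ => Set.Ioi 0) ⊆ good := by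
    intro t ht
    replace ht : ∀ x, 0 < t x := fun x => ht x trivial
    have ht0 : ∀ x, 0 ≤ t x := fun x => (ht x).le
    simp only [good, Set.mem_ofPred_eq, Function.iterate_succ_apply']
    exact dirDeriv_mul_le_sq_of_isHyperbolicForm ht0 (iterate_dirDeriv_nonneg ht0 hf n)
      (isHyperbolicForm_multisetHessian_iterate_dirDeriv hf ht ho hyp n (by simp)) a
  refine closure_minimal hpos hclosed ?_
  simp only [closure_pi_set, closure_Ioi]
  exact fun x _ => ht x

end DirectionalDerivative

section Fibers

variable {α β R : Type*} [DecidableEq β] (s : Finset α) (g : α → β) (v : α → R)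

theorem sum_sum_ite_eq_sum_sq_sum_fiber [CommSemiring R] :
    ∑ x ∈ s, ∑ y ∈ s, (if g x = g y then v x * v y else 0)
      = ∑ b ∈ s.image g, (∑ x ∈ s with g x = b, v x) ^ 2 := by
  rw [← Finset.sum_fiberwise_of_maps_to (t := s.image g) (g := g)
    fun x hx => Finset.mem_image_of_mem g hx]
  refine Finset.sum_congr rfl fun b _ => ?_
  rw [sq, Finset.sum_mul_sum]
  refine Finset.sum_congr rfl fun x hx => ?_
  rw [Finset.sum_filter, (Finset.mem_filter.1 hx).2]
  simp only [eq_comm]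

theorem sq_sum_le_card_image_mul_sum_sum_ite [CommRing R] [LinearOrder R] [IsStrictOrderedRing R] :
    (∑ x ∈ s, v x) ^ 2
      ≤ (s.image g).card * ∑ x ∈ s, ∑ y ∈ s, (if g x = g y then v x * v y else 0) := by
  rw [sum_sum_ite_eq_sum_sq_sum_fiber,
    ← Finset.sum_fiberwise_of_maps_to (s := s) (g := g) fun x hx => Finset.mem_image_of_mem g hx]
  exact sq_sum_le_card_mul_sum_sq

end Fibers

section Matroid

variable {Indep : Finset X → Prop}

theorem mem_mCont {S : Finset X} {x : X} : x ∈ mCont Indep S ↔ x ∉ S ∧ Indep (insert x S) := by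
  simp [mCont]

theorem card_mParClasses_le_contNum {S : Finset X} (hS : Indep S) :
    (mParClasses Indep S).card ≤ contNum Indep S.card :=
  Finset.le_sup (f := fun S => (mParClasses Indep S).card) (by simp [hS])

/-- The sum of `v x * v y` over the pairs of parallel continuations of `S`, that is, the sum of the
squared sums of `v` over the parallel classes. -/
def parallelSum (Indep : Finset X → Prop) (S : Finset X) (v : X → ℝ) : ℝ :=
  ∑ x ∈ mCont Indep S, ∑ y ∈ mCont Indep S,
    if mParClass Indep S x = mParClass Indep S y then v x * v y else 0

theorem parallelSum_nonneg (Indep : Finset X → Prop) (S : Finset X) (v : X → ℝ) :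
    0 ≤ parallelSum Indep S v := by
  rw [parallelSum, sum_sum_ite_eq_sum_sq_sum_fiber]
  exact Finset.sum_nonneg fun _ _ => sq_nonneg _

theorem sub_one_mul_sq_sum_mCont_le {S : Finset X} (hS : Indep S) {c : ℝ} (hc : 0 ≤ c)
    (hcp : (c - 1) * contNum Indep S.card ≤ c) (v : X → ℝ) :
    (c - 1) * (∑ x ∈ mCont Indep S, v x) ^ 2 ≤ c * parallelSum Indep S v := by
  have hnonneg := parallelSum_nonneg Indep S v
  have hclasses : ((mParClasses Indep S).card : ℝ) ≤ contNum Indep S.card :=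
    Nat.cast_le.2 (card_mParClasses_le_contNum hS)
  have hcauchy : (∑ x ∈ mCont Indep S, v x) ^ 2 ≤ contNum Indep S.card * parallelSum Indep S v :=
    (sq_sum_le_card_image_mul_sum_sum_ite _ _ _).trans
      (mul_le_mul_of_nonneg_right hclasses hnonneg)
  rcases le_total c 1 with hc1 | hc1
  · exact (mul_nonpos_of_nonpos_of_nonneg (sub_nonpos.2 hc1) (sq_nonneg _)).trans
      (mul_nonneg hc hnonneg)
  · calc (c - 1) * (∑ x ∈ mCont Indep S, v x) ^ 2
        ≤ (c - 1) * (contNum Indep S.card * parallelSum Indep S v) :=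
          mul_le_mul_of_nonneg_left hcauchy (sub_nonneg.2 hc1)
      _ = (c - 1) * contNum Indep S.card * parallelSum Indep S v := (mul_assoc _ _ _).symm
      _ ≤ c * parallelSum Indep S v := mul_le_mul_of_nonneg_right hcp hnonneg

/-- The number of independent sets of size `#S + m` containing `S`. -/
def numIndepExtensions (Indep : Finset X → Prop) (S : Finset X) (m : ℕ) : ℕ :=
  (Finset.univ.filter fun U : Finset X => Indep U ∧ S ⊆ U ∧ U.card = S.card + m).card

theorem numIndepExtensions_zero {S : Finset X} (hS : Indep S) :
    numIndepExtensions Indep S 0 = 1 := by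
  rw [numIndepExtensions, Finset.card_eq_one]
  refine ⟨S, Finset.ext fun U => ?_⟩
  simp only [Finset.mem_filter, Finset.mem_univ, true_and, Finset.mem_singleton, add_zero]
  constructor
  · rintro ⟨_, hSU, hcard⟩
    exact (Finset.eq_of_subset_of_card_le hSU hcard.le).symm
  · rintro rfl
    exact ⟨hS, subset_rfl, rfl⟩

theorem numIndepExtensions_empty (m : ℕ) : numIndepExtensions Indep ∅ m = numIndep Indep m := by
  simp [numIndepExtensions, numIndep]

section Exchange

variable (exch : ∀ S T : Finset X, Indep S → Indep T → S.card < T.card →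
  ∃ x ∈ T, x ∉ S ∧ Indep (insert x S))
include exch

theorem parallel_trans {S : Finset X} {x y z : X} (hx : x ∈ mCont Indep S) (hy : y ∈ mCont Indep S)
    (hz : z ∈ mCont Indep S) (hxy : x = y ∨ ¬ Indep (insert x (insert y S)))
    (hyz : y = z ∨ ¬ Indep (insert y (insert z S))) :
    x = z ∨ ¬ Indep (insert x (insert z S)) := by
  rcases hxy with rfl | hxy
  · exact hyz
  rcases hyz with rfl | hyz
  · exact Or.inr hxy
  by_contra! h
  obtain ⟨hxz, hxzS⟩ := h
  rw [mem_mCont] at hx hy hz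
  have hcard : (insert y S).card < (insert x (insert z S)).card := by
    rw [Finset.card_insert_of_notMem hy.1, Finset.card_insert_of_notMem (by simp [hxz, hx.1]),
      Finset.card_insert_of_notMem hz.1]
    omega
  obtain ⟨w, hw, hwy, hwI⟩ := exch _ _ hy.2 hxzS hcard
  rcases Finset.mem_insert.1 hw with rfl | hw
  · exact hxy hwI
  rcases Finset.mem_insert.1 hw with rfl | hw
  · exact hyz (by rwa [Finset.insert_comm])
  · exact hwy (Finset.mem_insert_of_mem hw)

theorem mParClass_eq_iff {S : Finset X} {x y : X} (hx : x ∈ mCont Indep S)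
    (hy : y ∈ mCont Indep S) :
    mParClass Indep S x = mParClass Indep S y ↔ x = y ∨ ¬ Indep (insert x (insert y S)) := by
  constructor
  · intro h
    have hmem : x ∈ mParClass Indep S x := by simp [mParClass, hx]
    rw [h] at hmem
    exact (Finset.mem_filter.1 hmem).2
  · intro hxy
    have hyx : y = x ∨ ¬ Indep (insert y (insert x S)) := by rwa [eq_comm, Finset.insert_comm]
    ext z
    simp only [mParClass, Finset.mem_filter]
    exact and_congr_right fun hz => ⟨fun hzx => parallel_trans exch hz hx hy hzx hxy,
      fun hzy => parallel_trans exch hz hy hx hzy hyx⟩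

end Exchange

section Hereditary

variable (hered : ∀ S T : Finset X, S ⊆ T → Indep T → Indep S)
include hered

omit [DecidableEq X] in
theorem exists_indep_card_eq_of_le_matroidRk (hne : ∃ S, Indep S) {n : ℕ}
    (hn : n ≤ matroidRk Indep) : ∃ S, Indep S ∧ S.card = n := by
  obtain ⟨S, hS⟩ := hne
  obtain ⟨T, hT, hTn⟩ : ∃ T, Indep T ∧ n ≤ T.card := by
    obtain ⟨T, -, hT⟩ := Finset.exists_mem_eq_sup Finset.univ ⟨S, Finset.mem_univ S⟩
      fun S : Finset X => if Indep S then S.card else 0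
    rw [matroidRk, hT] at hn
    split_ifs at hn with hI
    · exact ⟨T, hI, hn⟩
    · exact ⟨S, hS, hn.trans (Nat.zero_le _)⟩
  obtain ⟨U, hU, hUn⟩ := Finset.exists_subset_card_eq hTn
  exact ⟨U, hered U T hU hT, hUn⟩

/-- Both sides count the pairs `(x, U)` with `x ∈ U \ S` and `U` an independent extension of `S`. -/
theorem sum_numIndepExtensions_insert (S : Finset X) (m : ℕ) :
    ∑ x ∈ mCont Indep S, numIndepExtensions Indep (insert x S) m
      = (m + 1) * numIndepExtensions Indep S (m + 1) := by
  let exts := Finset.univ.filter fun U : Finset X => Indep U ∧ S ⊆ U ∧ U.card = S.card + (m + 1)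
  have habove : ∀ x ∈ mCont Indep S, numIndepExtensions Indep (insert x S) m
      = (exts.bipartiteAbove (· ∈ ·) x).card := by
    intro x hx
    rw [numIndepExtensions, Finset.card_insert_of_notMem (mem_mCont.1 hx).1]
    congr 1
    ext U
    simp only [exts, Finset.bipartiteAbove, Finset.mem_filter, Finset.mem_univ, true_and,
      Finset.insert_subset_iff, add_assoc, add_comm 1 m]
    tauto
  have hbelow : ∀ U ∈ exts, ((mCont Indep S).bipartiteBelow (· ∈ ·) U).card = m + 1 := by
    intro U hU
    obtain ⟨hUI, hSU, hcard⟩ := (Finset.mem_filter.1 hU).2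
    have hdiff : (mCont Indep S).bipartiteBelow (· ∈ ·) U = U \ S := by
      ext x
      simp only [Finset.bipartiteBelow, Finset.mem_filter, mem_mCont, Finset.mem_sdiff]
      exact ⟨fun h => ⟨h.2, h.1.1⟩,
        fun h => ⟨⟨h.2, hered _ _ (Finset.insert_subset h.1 hSU) hUI⟩, h.1⟩⟩
    rw [hdiff, Finset.card_sdiff_of_subset hSU, hcard, Nat.add_sub_cancel_left]
  rw [Finset.sum_congr rfl habove, Finset.sum_card_bipartiteAbove_eq_sum_card_bipartiteBelow,
    Finset.sum_congr rfl hbelow, Finset.sum_const, smul_eq_mul, mul_comm, numIndepExtensions]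

variable (exch : ∀ S T : Finset X, Indep S → Indep T → S.card < T.card →
  ∃ x ∈ T, x ∉ S ∧ Indep (insert x S))
include exch

theorem mem_mCont_and_mem_mCont_insert_iff {S : Finset X} {x y : X} :
    (y ∈ mCont Indep S ∧ x ∈ mCont Indep (insert y S)) ↔
      x ∈ mCont Indep S ∧ y ∈ mCont Indep S ∧ mParClass Indep S x ≠ mParClass Indep S y := by
  constructor
  · rintro ⟨hy, hx⟩
    obtain ⟨hxS, hxI⟩ := mem_mCont.1 hx
    have hx' : x ∈ mCont Indep S := mem_mCont.2 ⟨fun h => hxS (Finset.mem_insert_of_mem h),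
      hered _ _ (Finset.insert_subset_insert x (Finset.subset_insert y S)) hxI⟩
    refine ⟨hx', hy, fun h => ?_⟩
    rcases (mParClass_eq_iff exch hx' hy).1 h with rfl | hdep
    · exact hxS (Finset.mem_insert_self x S)
    · exact hdep hxI
  · rintro ⟨hx, hy, hne⟩
    rw [Ne, mParClass_eq_iff exch hx hy, not_or, not_not] at hne
    exact ⟨hy, mem_mCont.2 ⟨by simp [hne.1, (mem_mCont.1 hx).1], hne.2⟩⟩

theorem two_le_contNum {n : ℕ} (h : ∃ T, Indep T ∧ T.card = n + 2) :
    2 ≤ contNum Indep n := by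
  obtain ⟨T, hT, hcard⟩ := h
  obtain ⟨x, T', hx, rfl, hcard'⟩ := Finset.card_eq_succ.1 hcard
  obtain ⟨y, S, hy, rfl, rfl⟩ := Finset.card_eq_succ.1 hcard'
  have hyS : Indep (insert y S) := hered _ _ (Finset.subset_insert x _) hT
  obtain ⟨hxC, hyC, hne⟩ := (mem_mCont_and_mem_mCont_insert_iff hered exch).1
    ⟨mem_mCont.2 ⟨hy, hyS⟩, mem_mCont.2 ⟨hx, hT⟩⟩
  calc 2 ≤ (mParClasses Indep S).card := Finset.one_lt_card.2
        ⟨_, Finset.mem_image_of_mem _ hxC, _, Finset.mem_image_of_mem _ hyC, hne⟩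
    _ ≤ contNum Indep S.card :=
        card_mParClasses_le_contNum (hered _ _ (Finset.subset_insert y S) hyS)

end Hereditary

end Matroid

section GroundPart

variable {α : Type*}

/-- The elements of `α` in a multiset over `Option α`, whose element `none` stands for one extra
variable. -/
def groundPart (M : Multiset (Option α)) : Multiset α := M.filterMap id

@[simp]
theorem groundPart_cons_none (M : Multiset (Option α)) : groundPart (none ::ₘ M) = groundPart M :=
  Multiset.filterMap_cons_none _ _ rfl

@[simp]
theorem groundPart_cons_some (x : α) (M : Multiset (Option α)) :
    groundPart (some x ::ₘ M) = x ::ₘ groundPart M :=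
  Multiset.filterMap_cons_some _ _ _ rfl

theorem card_groundPart_add_count_none [DecidableEq α] (M : Multiset (Option α)) :
    (groundPart M).card + M.count none = M.card := by
  induction M using Multiset.induction with
  | empty => rfl
  | cons z M ih =>
    cases z with
    | none => simp [← ih, add_assoc]
    | some x => simp [← ih, add_right_comm]

end GroundPart

theorem dotProduct_mulVec_option {α R : Type*} [Fintype α] [CommRing R]
    {Q : Matrix (Option α) (Option α) R} (hQ : Q.IsSymm) (v : Option α → R) :
    v ⬝ᵥ Q *ᵥ v = Q none none * v none ^ 2
      + 2 * v none * ∑ x, Q none (some x) * v (some x)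
      + ∑ x, ∑ y, Q (some x) (some y) * (v (some x) * v (some y)) := by
  have hcross : ∑ x, v (some x) * (Q (some x) none * v none)
      = v none * ∑ x, Q none (some x) * v (some x) := by
    rw [Finset.mul_sum]
    refine Finset.sum_congr rfl fun x _ => ?_
    rw [hQ.apply none (some x)]
    ring
  have hground : ∑ x, v (some x) * ∑ y, Q (some x) (some y) * v (some y)
      = ∑ x, ∑ y, Q (some x) (some y) * (v (some x) * v (some y)) := by
    simp only [Finset.mul_sum, mul_left_comm]
  simp only [Matrix.mulVec, dotProduct, Fintype.sum_option, mul_add, Finset.sum_add_distrib, hcross,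
    hground]
  ring

section IndepWeight

variable {α : Type*} [DecidableEq α] {Indep : Finset α → Prop}

/-- The multisets of variables whose elements other than `none` are distinct and form an independent
set: these index the monomials of the polynomial behind `indepWeight`. -/
def IsIndepMultiset (Indep : Finset α → Prop) (M : Multiset (Option α)) : Prop :=
  (groundPart M).Nodup ∧ Indep (groundPart M).toFinset

/-- For `M` of size `d`, the constant `∂^M P`, where `P` is the sum over the independent sets `U` of
`c ^ (j - 1) * w ^ j / j! * ∏ x ∈ U, w_x` with `j = d - #U`, and `w` is the variable `none`. The
truncated subtraction gives the weights `1`, `1`, `c` to zero, one and two occurrences of `none`. -/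
def indepWeight (Indep : Finset α → Prop) (c : ℝ) (M : Multiset (Option α)) : ℝ :=
  if IsIndepMultiset Indep M then c ^ (M.count none - 1) else 0

theorem IsIndepMultiset.card_add_count_none {M : Multiset (Option α)}
    (hM : IsIndepMultiset Indep M) : (groundPart M).toFinset.card + M.count none = M.card := by
  rw [Multiset.toFinset_card_of_nodup hM.1, card_groundPart_add_count_none]

theorem isIndepMultiset_cons_none {M : Multiset (Option α)} :
    IsIndepMultiset Indep (none ::ₘ M) ↔ IsIndepMultiset Indep M := by
  simp only [IsIndepMultiset, groundPart_cons_none]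

theorem IsIndepMultiset.of_cons (hered : ∀ S T : Finset α, S ⊆ T → Indep T → Indep S)
    {z : Option α} {M : Multiset (Option α)} (hM : IsIndepMultiset Indep (z ::ₘ M)) :
    IsIndepMultiset Indep M := by
  cases z with
  | none => exact isIndepMultiset_cons_none.1 hM
  | some x =>
    rw [IsIndepMultiset, groundPart_cons_some, Multiset.toFinset_cons] at hM
    exact ⟨(Multiset.nodup_cons.1 hM.1).2, hered _ _ (Finset.subset_insert x _) hM.2⟩

theorem indepWeight_nonneg {c : ℝ} (hc : 0 ≤ c) (M : Multiset (Option α)) :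
    0 ≤ indepWeight Indep c M := by
  rw [indepWeight]
  split_ifs
  · exact pow_nonneg hc _
  · exact le_rfl

theorem indepWeight_cons_none (c : ℝ) (M : Multiset (Option α)) :
    indepWeight Indep c (none ::ₘ M) = if IsIndepMultiset Indep M then c ^ M.count none else 0 := by
  simp only [indepWeight, isIndepMultiset_cons_none, Multiset.count_cons_self,
    Nat.add_sub_cancel]

theorem isApex_none_indepWeight (hered : ∀ S T : Finset α, S ⊆ T → Indep T → Indep S) {c : ℝ}
    (hc : 0 < c) : IsApex none (indepWeight Indep c) := by
  intro z M hz
  have hM : IsIndepMultiset Indep M := by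
    by_contra hM
    rw [indepWeight, if_neg fun h => hM (h.of_cons hered)] at hz
    exact hz.false
  rw [indepWeight_cons_none, if_pos hM]
  exact pow_pos hc _

theorem multisetHessian_indepWeight_eq_zero
    (hered : ∀ S T : Finset α, S ⊆ T → Indep T → Indep S) {M : Multiset (Option α)}
    (hM : ¬ IsIndepMultiset Indep M) (c : ℝ) : multisetHessian (indepWeight Indep c) M = 0 :=
  Matrix.ext fun _ _ => if_neg fun h => hM ((h.of_cons hered).of_cons hered)

end IndepWeight

/-- The sum of the coordinate directions of `α`; the extra variable `none` is kept fixed. -/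
def groundIndicator (α : Type*) : Option α → ℝ
  | none => 0
  | some _ => 1

theorem dirDeriv_groundIndicator {α : Type*} [Fintype α] (f : Multiset (Option α) → ℝ) :
    dirDeriv (groundIndicator α) f = fun M => ∑ x, f (some x ::ₘ M) := by
  ext M
  simp [dirDeriv, Fintype.sum_option, groundIndicator]

theorem groundIndicator_nonneg {α : Type*} (z : Option α) : 0 ≤ groundIndicator α z := by
  cases z
  exacts [le_rfl, zero_le_one]

section MatroidHessian

variable {Indep : Finset X → Prop} (hered : ∀ S T : Finset X, S ⊆ T → Indep T → Indep S)
include hered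

theorem isIndepMultiset_cons_some {x : X} {M : Multiset (Option X)} :
    IsIndepMultiset Indep (some x ::ₘ M) ↔
      IsIndepMultiset Indep M ∧ x ∈ mCont Indep (groundPart M).toFinset := by
  simp only [IsIndepMultiset, groundPart_cons_some, Multiset.nodup_cons, Multiset.toFinset_cons,
    mem_mCont, Multiset.mem_toFinset]
  exact ⟨fun ⟨⟨hx, hnodup⟩, hI⟩ => ⟨⟨hnodup, hered _ _ (Finset.subset_insert x _) hI⟩, hx, hI⟩,
    fun ⟨⟨hnodup, _⟩, hx, hI⟩ => ⟨⟨hx, hnodup⟩, hI⟩⟩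

theorem indepWeight_cons_some (c : ℝ) (x : X) (M : Multiset (Option X)) :
    indepWeight Indep c (some x ::ₘ M)
      = if x ∈ mCont Indep (groundPart M).toFinset then indepWeight Indep c M else 0 := by
  simp only [indepWeight, isIndepMultiset_cons_some hered,
    Multiset.count_cons_of_ne (Option.some_ne_none x).symm, and_comm (a := IsIndepMultiset _ _),
    ite_and]

section Exchange

variable (exch : ∀ S T : Finset X, Indep S → Indep T → S.card < T.card →
  ∃ x ∈ T, x ∉ S ∧ Indep (insert x S))
include exch

theorem indepWeight_cons_some_cons_some (c : ℝ) (x y : X) {M : Multiset (Option X)}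
    {S : Finset X} (hS : (groundPart M).toFinset = S) :
    indepWeight Indep c (some x ::ₘ some y ::ₘ M)
      = if x ∈ mCont Indep S ∧ y ∈ mCont Indep S ∧ mParClass Indep S x ≠ mParClass Indep S y
        then indepWeight Indep c M else 0 := by
  rw [indepWeight_cons_some hered, indepWeight_cons_some hered, groundPart_cons_some,
    Multiset.toFinset_cons, hS, ← ite_and]
  exact if_congr (and_comm.trans (mem_mCont_and_mem_mCont_insert_iff hered exch)) rfl rfl

theorem dotProduct_multisetHessian_indepWeight_mulVec (c : ℝ) {M : Multiset (Option X)}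
    (hM : IsIndepMultiset Indep M) {S : Finset X} (hS : (groundPart M).toFinset = S)
    (v : Option X → ℝ) :
    v ⬝ᵥ multisetHessian (indepWeight Indep c) M *ᵥ v
      = c ^ (M.count none + 1) * v none ^ 2
        + 2 * v none * (c ^ M.count none * ∑ x ∈ mCont Indep S, v (some x))
        + c ^ (M.count none - 1) * ((∑ x ∈ mCont Indep S, v (some x)) ^ 2
          - parallelSum Indep S fun x => v (some x)) := by
  have hnone : indepWeight Indep c (none ::ₘ none ::ₘ M) = c ^ (M.count none + 1) := by
    rw [indepWeight_cons_none, if_pos (isIndepMultiset_cons_none.2 hM), Multiset.count_cons_self]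
  have hcross : ∑ x, indepWeight Indep c (none ::ₘ some x ::ₘ M) * v (some x)
      = c ^ M.count none * ∑ x ∈ mCont Indep S, v (some x) := by
    simp only [Multiset.cons_swap none, indepWeight_cons_some hered, groundPart_cons_none, hS,
      indepWeight_cons_none, if_pos hM, ite_mul, zero_mul, Finset.sum_ite_mem, Finset.univ_inter,
      Finset.mul_sum]
  have hground : ∑ x, ∑ y, indepWeight Indep c (some x ::ₘ some y ::ₘ M) * (v (some x) * v (some y))
      = c ^ (M.count none - 1) * ((∑ x ∈ mCont Indep S, v (some x)) ^ 2
        - parallelSum Indep S fun x => v (some x)) := by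
    have hentry : ∀ x y, indepWeight Indep c (some x ::ₘ some y ::ₘ M) * (v (some x) * v (some y))
        = if x ∈ mCont Indep S then if y ∈ mCont Indep S then c ^ (M.count none - 1)
          * (v (some x) * v (some y) - if mParClass Indep S x = mParClass Indep S y
            then v (some x) * v (some y) else 0) else 0 else 0 := by
      intro x y
      rw [indepWeight_cons_some_cons_some hered exch c x y hS, indepWeight, if_pos hM]
      by_cases hx : x ∈ mCont Indep S <;> by_cases hy : y ∈ mCont Indep S <;>
        by_cases hpar : mParClass Indep S x = mParClass Indep S y <;> simp [hx, hy, hpar]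
    simp only [hentry, parallelSum, Finset.sum_ite_irrel, Finset.sum_const_zero, Finset.sum_ite_mem,
      Finset.univ_inter, ← Finset.mul_sum, Finset.sum_sub_distrib, sq, ← Finset.sum_mul]
  rw [dotProduct_mulVec_option (isSymm_multisetHessian _ _), ← hground, ← hcross, ← hnone]
  rfl

theorem isHyperbolicForm_multisetHessian_indepWeight {c : ℝ} (hc : 0 < c) {n : ℕ}
    (hcn : (c - 1) * contNum Indep n ≤ c) {M : Multiset (Option X)} (hcard : M.card = n) :
    IsHyperbolicForm (multisetHessian (indepWeight Indep c) M) := by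
  by_cases hM : IsIndepMultiset Indep M
  swap
  · exact ⟨0, fun v _ => by simp [multisetHessian_indepWeight_eq_zero hered hM]⟩
  obtain ⟨S, hS⟩ : ∃ S, (groundPart M).toFinset = S := ⟨_, rfl⟩
  refine ⟨fun z => z.elim c fun x => if x ∈ mCont Indep S then 1 else 0, fun v hv => ?_⟩
  rw [dotProduct_multisetHessian_indepWeight_mulVec hered exch c hM hS]
  have hperp : ∑ x ∈ mCont Indep S, v (some x) = -(c * v none) := by
    rw [eq_neg_iff_add_eq_zero, add_comm]
    simpa [dotProduct, Fintype.sum_option] using hv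
  have hnonneg := parallelSum_nonneg Indep S fun x => v (some x)
  rcases hi : M.count none with _ | i
  · have hSn : S.card = n := by rw [← hcard, ← hM.card_add_count_none, hS, hi, add_zero]
    have hscaled := sub_one_mul_sq_sum_mCont_le (hS ▸ hM.2) hc.le (hSn ▸ hcn) fun x => v (some x)
    rw [hperp] at hscaled ⊢
    have hbase : c * (c - 1) * v none ^ 2 ≤ parallelSum Indep S fun x => v (some x) :=
      le_of_mul_le_mul_left (by linarith) hc
    simp only [zero_add, pow_one, pow_zero, zero_tsub]
    linarith
  · have := mul_nonneg (pow_nonneg hc.le i) hnonneg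
    rw [hperp, Nat.add_sub_cancel]
    linear_combination this

end Exchange

theorem iterate_dirDeriv_groundIndicator_indepWeight (c : ℝ) (m : ℕ) (M : Multiset (Option X)) :
    (dirDeriv (groundIndicator X))^[m] (indepWeight Indep c) M
      = indepWeight Indep c M
        * (m.factorial * numIndepExtensions Indep (groundPart M).toFinset m) := by
  induction m generalizing M with
  | zero =>
    by_cases hM : IsIndepMultiset Indep M
    · simp [numIndepExtensions_zero hM.2]
    · simp [indepWeight, hM]
  | succ m ih =>
    rw [Function.iterate_succ_apply', dirDeriv_groundIndicator]
    simp only [ih, indepWeight_cons_some hered, groundPart_cons_some, Multiset.toFinset_cons,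
      ite_mul, zero_mul, Finset.sum_ite_mem, Finset.univ_inter, ← Finset.mul_sum, ← Nat.cast_sum,
      sum_numIndepExtensions_insert hered, Nat.factorial_succ]
    push_cast
    ring

theorem iterate_dirDeriv_groundIndicator_indepWeight_replicate_none (hempty : Indep ∅) (c : ℝ)
    (m i : ℕ) :
    (dirDeriv (groundIndicator X))^[m] (indepWeight Indep c) (Multiset.replicate i none)
      = c ^ (i - 1) * (m.factorial * numIndep Indep m) := by
  have hground : groundPart (Multiset.replicate i (none : Option X)) = 0 := by
    induction i with
    | zero => rfl
    | succ i ih => rw [Multiset.replicate_succ, groundPart_cons_none, ih]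
  rw [iterate_dirDeriv_groundIndicator_indepWeight hered, hground, Multiset.toFinset_zero,
    numIndepExtensions_empty, indepWeight, if_pos ⟨by simp [hground], by simpa [hground]⟩,
    Multiset.count_replicate_self]

theorem factorial_mul_numIndep_mul_le_sq (exch : ∀ S T : Finset X, Indep S → Indep T →
    S.card < T.card → ∃ x ∈ T, x ∉ S ∧ Indep (insert x S)) (hempty : Indep ∅) {c : ℝ} (hc : 0 < c)
    {n : ℕ} (hcn : (c - 1) * contNum Indep n ≤ c) :
    (n + 2).factorial * numIndep Indep (n + 2) * (c * (n.factorial * numIndep Indep n))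
      ≤ ((n + 1).factorial * numIndep Indep (n + 1) : ℝ) ^ 2 := by
  have hderiv := iterate_dirDeriv_groundIndicator_indepWeight_replicate_none hered hempty c
  have hcard : ∀ M : Multiset (Option X), M.card = n →
      IsHyperbolicForm (multisetHessian (indepWeight Indep c) M) :=
    fun M => isHyperbolicForm_multisetHessian_indepWeight hered exch hc hcn
  have hle := iterate_dirDeriv_mul_le_sq (indepWeight_nonneg hc.le)
    (isApex_none_indepWeight hered hc) hcard (groundIndicator_nonneg (α := X)) none
  change _ * (dirDeriv _)^[n] _ (Multiset.replicate 2 none) ≤ _ at hle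
  rw [← Multiset.replicate_zero none, ← Multiset.replicate_one none, hderiv, hderiv, hderiv] at hle
  simpa using hle

end MatroidHessian

/-- **Refined log-concavity for matroids.** -/
theorem matroid_refined_log_concavity
    (Indep : Finset X → Prop)
    (h_ne : ∃ S : Finset X, Indep S)
    (h_hered : ∀ S T : Finset X, S ⊆ T → Indep T → Indep S)
    (h_exch : ∀ S T : Finset X, Indep S → Indep T → S.card < T.card →
      ∃ x ∈ T, x ∉ S ∧ Indep (insert x S))
    (k : ℕ) (hk1 : 1 ≤ k) (hk2 : k < matroidRk Indep) :
    ((1 : ℝ) + 1 / (k : ℝ)) * (1 + 1 / ((contNum Indep (k - 1) : ℝ) - 1)) *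
        (numIndep Indep (k - 1) : ℝ) * (numIndep Indep (k + 1) : ℝ) ≤
      (numIndep Indep k : ℝ) ^ 2 := by
  obtain ⟨n, rfl⟩ : ∃ n, k = n + 1 := ⟨k - 1, by omega⟩
  have hempty : Indep ∅ := h_ne.elim fun S => h_hered ∅ S (Finset.empty_subset S)
  have hp : 2 ≤ contNum Indep n :=
    two_le_contNum h_hered h_exch (exists_indep_card_eq_of_le_matroidRk h_hered h_ne hk2)
  have hp1 : (0 : ℝ) < contNum Indep n - 1 := sub_pos.2 (Nat.one_lt_cast.2 hp)
  set c : ℝ := 1 + 1 / ((contNum Indep n : ℝ) - 1) with hc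
  have hcp : (c - 1) * contNum Indep n ≤ c := by
    rw [hc]
    field_simp
    linarith
  have hmain := factorial_mul_numIndep_mul_le_sq h_hered h_exch hempty (by positivity) hcp
  have hratio : (n + 2).factorial * n.factorial
      = (1 + 1 / ((n + 1 : ℕ) : ℝ)) * (n + 1).factorial ^ 2 := by
    simp only [Nat.factorial_succ]
    push_cast
    field_simp
  refine le_of_mul_le_mul_left ?_ (by positivity : (0 : ℝ) < (n + 1).factorial ^ 2)
  rw [Nat.add_sub_cancel, ← hc]
  linear_combination hmain - c * numIndep Indep n * numIndep Indep (n + 2) * hratio
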